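/- Let α be a partition with all parts at least 2 and overlapping partition p. Then R_α^p has full Schur support, i.e. [R_α^p] = [α, (|α|−p_1, p_1)], if and only if either ℓ(p) < 2, or ℓ(p) ≥ 2 and for every 1 ≤ i ≤ ℓ(p)−1 the i-witness vector is oversized with respect to its slack: Σ_{j=1}^i max(0, ϱ_i − α_j) ≥ p_{i+1}. -/

import Mathlib

namespace RibbonSupport

/-- A partition: a weakly decreasing list of positive integers. -/
def IsPartition (a : List ℕ) : Prop := a.Pairwise (· ≥ ·) ∧ ∀ x ∈ a, 0 < x

/-- All parts of the list are at least `m`. -/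
def PartsGE (a : List ℕ) (m : ℕ) : Prop := ∀ x ∈ a, m ≤ x

/-- Dominance order `lam ⪯ mu` on partitions of the same size. -/
def DomLE (lam mu : List ℕ) : Prop :=
  lam.sum = mu.sum ∧ ∀ i, (lam.take i).sum ≤ (mu.take i).sum

/-- The number of nonzero parts. -/
def lenp (p : List ℕ) : ℕ := p.countP (fun x => decide (x ≠ 0))

/-- `p` is an overlapping partition for the monotone ribbon with row lengths `a`:
`p` has the same length as `a`, its last entry is `0`, and consecutive entries
decrease by `0` or `1`. -/
def IsOverlapSeq (a p : List ℕ) : Prop :=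
  p.length = a.length ∧ p.getD (a.length - 1) 0 = 0 ∧
    ∀ i, i + 1 < a.length →
      p.getD i 0 = p.getD (i + 1) 0 ∨ p.getD i 0 = p.getD (i + 1) 0 + 1

/-- Rows `i` and `i+1` (0-based, top to bottom) of `R_a^p` overlap
(share exactly one column) exactly when `p_i = p_{i+1} + 1`. -/
def ovOf (p : List ℕ) : ℕ → Bool := fun i => decide (p.getD i 0 = p.getD (i + 1) 0 + 1)

def rowOffset (a : List ℕ) (i : ℕ) : ℕ := (a.take i).sum

/-- `w` is the reading word (rows right-to-left, top to bottom) of a semistandard filling of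
the ribbon with row lengths `a` (top to bottom) in which consecutive rows `i`, `i+1` share
exactly one column when `ov i = true` and no column otherwise.  Semistandardness amounts to:
within each row block the word is weakly decreasing (rows weakly increase left to right), and
at each overlapping gap the word strictly increases (columns strictly increase downwards). -/
def IsRibbonWord (a : List ℕ) (ov : ℕ → Bool) (w : List ℕ) : Prop :=
  w.length = a.sum ∧
  (∀ i j, i < a.length → j + 1 < a.getD i 0 →
    w.getD (rowOffset a i + j + 1) 0 ≤ w.getD (rowOffset a i + j) 0) ∧
  (∀ i, i + 1 < a.length → ov i = true →
    w.getD (rowOffset a (i + 1) - 1) 0 < w.getD (rowOffset a (i + 1)) 0)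

/-- Yamanouchi (lattice) word: each prefix has at least as many letters `j` as `j+1`. -/
def IsYam (w : List ℕ) : Prop := ∀ k j, (w.take k).count (j + 2) ≤ (w.take k).count (j + 1)

/-- The word `w` has content `nu` (and only positive letters). -/
def HasContent (w : List ℕ) (nu : List ℕ) : Prop :=
  (∀ j, w.count (j + 1) = nu.getD j 0) ∧ w.count 0 = 0

/-- There is an LR filling of the ribbon `(a, ov)` with content `nu`. -/
def InSupportOv (a : List ℕ) (ov : ℕ → Bool) (nu : List ℕ) : Prop :=
  ∃ w : List ℕ, IsRibbonWord a ov w ∧ IsYam w ∧ HasContent w nu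

/-- `nu` is in the Schur support of the monotone ribbon `R_a^p`. -/
def InSupport (a p nu : List ℕ) : Prop := InSupportOv a (ovOf p) nu

/-- `nu` is in the Schur support of the connected ribbon `R_a`. -/
def InSupportConn (a nu : List ℕ) : Prop := InSupportOv a (fun _ => true) nu

/-- `nu` belongs to the Schur interval `[a, (|a| - p₁, p₁)]` in dominance order. -/
def InInterval (a p nu : List ℕ) : Prop :=
  DomLE a nu ∧ DomLE nu [a.sum - p.getD 0 0, p.getD 0 0]

/-- The Schur support of `R_a^p`, as a set of partitions. -/
def SupportSet (a p : List ℕ) : Set (List ℕ) := {nu | IsPartition nu ∧ InSupport a p nu}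

/-- The Schur interval of `R_a^p`, as a set of partitions. -/
def IntervalSet (a p : List ℕ) : Set (List ℕ) := {nu | IsPartition nu ∧ InInterval a p nu}

/-- `R_a^p` has full Schur support. -/
def FullSupport (a p : List ℕ) : Prop := SupportSet a p = IntervalSet a p

/-- The Schur support of the connected ribbon `R_a`, as a set of partitions. -/
def SupportSetConn (a : List ℕ) : Set (List ℕ) := {nu | IsPartition nu ∧ InSupportConn a nu}

/-- `ϱ_i` (1-based `i`): `Σ_{q=i+1}^{ℓ(a)} a_q − p_{i+1} + 1`. -/
def rho (a p : List ℕ) (i : ℕ) : ℕ := (a.drop i).sum + 1 - p.getD i 0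

/-- Entry `j` (1-based) of the `i`-witness vector: `[ϱ_i − a_j]₊`. -/
def wit (a p : List ℕ) (i j : ℕ) : ℕ := rho a p i - a.getD (j - 1) 0

/-- Size of the `i`-witness vector. -/
def witSize (a p : List ℕ) (i : ℕ) : ℕ := ∑ j ∈ Finset.Icc 1 i, wit a p i j

/-! ### Tableaux -/

/-- Cells (0-based `(row, column)`) of the Young diagram of `lam`. -/
def cells (lam : List ℕ) : Finset (ℕ × ℕ) :=
  (Finset.range lam.length ×ˢ Finset.range (lam.sum + 1)).filter
    (fun x => x.2 < lam.getD x.1 0)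

/-- `T` is a semistandard Young tableau of shape `lam` and content `al`
(normalized to vanish off the diagram). -/
def IsTab (lam al : List ℕ) (T : ℕ × ℕ → ℕ) : Prop :=
  (∀ x, x ∉ cells lam → T x = 0) ∧
  (∀ x ∈ cells lam, 1 ≤ T x) ∧
  (∀ i c, (i, c + 1) ∈ cells lam → T (i, c) ≤ T (i, c + 1)) ∧
  (∀ i c, (i + 1, c) ∈ cells lam → T (i, c) < T (i + 1, c)) ∧
  (∀ k, ((cells lam).filter (fun x => T x = k + 1)).card = al.getD k 0)

/-- Standardization of a tableau: entries are renumbered `1, …, N` in increasing order of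
value, entries of equal value being numbered from southwest to northeast (by column). -/
def stdz (lam : List ℕ) (T : ℕ × ℕ → ℕ) : ℕ × ℕ → ℕ := fun x =>
  if x ∈ cells lam then
    ((cells lam).filter (fun y => T y < T x ∨ (T y = T x ∧ y.2 < x.2))).card + 1
  else 0

/-- `n` is a descent of the standard tableau `U`: the entry `n+1` lies in a strictly
lower row than the entry `n`. -/
def IsDescent (lam : List ℕ) (U : ℕ × ℕ → ℕ) (n : ℕ) : Prop :=
  ∃ x ∈ cells lam, ∃ y ∈ cells lam, U x = n ∧ U y = n + 1 ∧ x.1 < y.1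

/-- `S(al)`: the set of proper partial sums of the composition `al`. -/
def Sset (al : List ℕ) : Set ℕ := {n | ∃ k, 0 < k ∧ k < al.length ∧ n = (al.take k).sum}

/-- `s ∈ D(T)`: some entry `s+1` of `T` lies in a strictly lower row than some entry `s`. -/
def TabDescent (lam : List ℕ) (T : ℕ × ℕ → ℕ) (s : ℕ) : Prop :=
  ∃ x ∈ cells lam, ∃ y ∈ cells lam, T x = s ∧ T y = s + 1 ∧ x.1 < y.1

/-- The word `w_{T̂}` of `T`: its `u`-th letter (1-based) is the 1-based row index of the
entry `u` of the standardization `T̂` of `T`. -/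
def wordOf (lam : List ℕ) (T : ℕ × ℕ → ℕ) : List ℕ :=
  (List.range lam.sum).map fun n =>
    ∑ x ∈ (cells lam).filter (fun x => stdz lam T x = n + 1), (x.1 + 1)

/-- `j ∈ {2, …, ℓ(al)}` is a critical number of `T ∈ Tab(lam, al)`:
`w_{α_1+⋯+α_{j-1}} = w_{α_1+⋯+α_{j-1}+1}` in the word of `T`. -/
def CriticalNum (lam al : List ℕ) (T : ℕ × ℕ → ℕ) (j : ℕ) : Prop :=
  2 ≤ j ∧ j ≤ al.length ∧
    (wordOf lam T).getD ((al.take (j - 1)).sum - 1) 0 =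
      (wordOf lam T).getD ((al.take (j - 1)).sum) 0

/-- `j ∈ {2, …, ℓ(al)}` is a negligible critical number of `T`:
`w_{α_1+⋯+α_{j-1}} > w_{α_1+⋯+α_{j-1}+1}` in the word of `T`. -/
def NegligibleNum (lam al : List ℕ) (T : ℕ × ℕ → ℕ) (j : ℕ) : Prop :=
  2 ≤ j ∧ j ≤ al.length ∧
    (wordOf lam T).getD ((al.take (j - 1)).sum) 0 <
      (wordOf lam T).getD ((al.take (j - 1)).sum - 1) 0

/-- The overlapping partition of the ribbon encoded by its gap pattern `b`
(`b j = true` iff rows `j` and `j+1`, 0-based, overlap). -/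
def povOf (b : List Bool) : List ℕ :=
  (List.range (b.length + 1)).map fun i => (b.drop i).count true

/-! ### Connected ribbons with rows in arbitrary order -/

/-- Starting column (0-based) of row `i` of the connected ribbon with row lengths `b`. -/
def startConn (b : List ℕ) (i : ℕ) : ℕ := (b.drop (i + 1)).sum + (i + 1) - b.length

/-- Number of columns of the connected ribbon with row lengths `b`. -/
def ncols (b : List ℕ) : ℕ := b.sum + 1 - b.length

/-- Length of column `c` of the connected ribbon with row lengths `b`. -/
def colLen (b : List ℕ) (c : ℕ) : ℕ :=
  ((Finset.range b.length).filter
    (fun i => startConn b i ≤ c ∧ c < startConn b i + b.getD i 0)).card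

/-- Deletion rank of row `j`: the number of rows deleted strictly before row `j` when one
repeatedly deletes a longest remaining row in highest (most northern) position. -/
def delRank (g : List ℕ) (j : ℕ) : ℕ :=
  ((Finset.range g.length).filter
    (fun j' => g.getD j 0 < g.getD j' 0 ∨ (g.getD j' 0 = g.getD j 0 ∧ j' < j))).card

/-- The overlapping partition of the connected ribbon with row lengths `g`:
its `(d+1)`-st entry is the number of length-two columns of the ribbon remaining
after deleting `d` rows as above, i.e. the number of adjacent pairs of surviving rows. -/
def ppiList (g : List ℕ) : List ℕ :=
  (List.range g.length).map fun d =>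
    ((Finset.range (g.length - 1)).filter
      (fun j => d ≤ delRank g j ∧ d ≤ delRank g (j + 1))).card

/-!
The support of the ribbon consists of the partitions `nu` that dominate `a` and satisfy
`nu i ≤ rowCap i` for every part `i` (indices start at `0`).  These conditions are necessary: by the
Yamanouchi condition the letters in the first `m` rows are at most `m`, so the letters `i + 1` all
lie in the rows `i, …, ℓ(a) - 1`, and each overlap of two of these rows costs one of them, since the
two boxes of a column carry different letters.  They are sufficient: one can remove a horizontal
strip of the size of the last row so that the remaining parts satisfy the same conditions for the
remaining rows; choosing these parts greedily, between bounds which leave room for a strict increase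
at the last overlap, preserves dominance.

The Schur interval only bounds the first part, by `rowCap 0`.  So the support is not full exactly
when some `nu` in the interval has `nu i ≥ rowCap i + 1 = ϱ_i` for some `i ≥ 1`.  Then the first `i`
parts of `nu` add up to at least `∑_{j < i} max (a j) ϱ_i`, and room for part `i` remains
exactly if the `i`-witness has size less than `p_{i+1}`.
-/

open Finset

section Sums

lemma sum_take_eq_sum_getD (l : List ℕ) (m : ℕ) :
    (l.take m).sum = ∑ j ∈ range m, l.getD j 0 := by
  induction m with
  | zero => simp
  | succ m ih =>
    rw [sum_range_succ, ← ih, List.take_add_one, List.sum_append, List.getD_eq_getElem?_getD]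
    cases l[m]? <;> simp

lemma sum_eq_sum_getD {l : List ℕ} {m : ℕ} (hm : l.length ≤ m) :
    l.sum = ∑ j ∈ range m, l.getD j 0 := by
  rw [← sum_take_eq_sum_getD, List.take_of_length_le hm]

lemma antitone_getD_of_pairwise {l : List ℕ} (hl : l.Pairwise (· ≥ ·)) :
    Antitone fun j => l.getD j 0 := by
  intro i j hij
  rcases lt_or_ge j l.length with hj | hj
  · have hi := hij.trans_lt hj
    simpa [hj, hi] using hl.rel_get_of_le (a := ⟨i, hi⟩) (b := ⟨j, hj⟩) hij
  · simp [hj]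

lemma le_getD_of_forall_mem {l : List ℕ} {m i : ℕ} (hl : ∀ x ∈ l, m ≤ x) (hi : i < l.length) :
    m ≤ l.getD i 0 := by
  rw [List.getD_eq_getElem _ _ hi]
  exact hl _ (List.getElem_mem hi)

lemma sum_range_add_sub_le {u : ℕ → ℕ} {i m : ℕ} (him : i ≤ m) (hu : ∀ j < m, 0 < u j) :
    ∑ j ∈ range i, u j + (m - i) ≤ ∑ j ∈ range m, u j := by
  induction m, him using Nat.le_induction with
  | base => simp
  | succ m him ih =>
    have := ih fun j hj => hu j (by omega)
    have := hu m (by omega)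
    rw [sum_range_succ]
    omega

lemma sum_range_eq_of_antitone {v : ℕ → ℕ} (hv : Antitone v) {m n : ℕ} (hm : v m = 0)
    (hmn : m ≤ n) : ∑ j ∈ range n, v j = ∑ j ∈ range m, v j := by
  refine (sum_subset (range_subset_range.2 hmn) fun j _ hj => ?_).symm
  exact Nat.le_zero.1 (hm ▸ hv (by simpa using hj))

lemma exists_last_pos {v : ℕ → ℕ} {n : ℕ} (h0 : 0 < v 0) (hn : v n = 0) :
    ∃ s, 0 < v s ∧ v (s + 1) = 0 := by
  by_contra! hv
  exact (Nat.rec h0 (fun k hk => Nat.pos_of_ne_zero (hv k hk)) n : 0 < v n).ne' hn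

lemma exists_greedy_between {l u : ℕ → ℕ} (hlu : ∀ j, l j ≤ u j) {n N : ℕ}
    (hl : ∑ j ∈ range n, l j ≤ N) (hu : N ≤ ∑ j ∈ range n, u j) :
    ∃ (w : ℕ → ℕ) (k : ℕ), (∀ j, l j ≤ w j ∧ w j ≤ u j) ∧ ∑ j ∈ range n, w j = N ∧
      (∀ j < k, w j = u j) ∧ (∀ j > k, w j = l j) ∧ ∀ j ≥ n, w j = l j := by
  induction n generalizing N with
  | zero => exact ⟨l, 0, fun j => ⟨le_rfl, hlu j⟩, hl.antisymm hu, by simp, by simp, by simp⟩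
  | succ n ih =>
    rw [sum_range_succ] at hl hu
    rcases le_or_gt N (∑ j ∈ range n, u j + l n) with hN | hN
    · obtain ⟨w, k, hw, hsum, hwu, hwl, hwn⟩ := ih (N := N - l n) (by omega) (by omega)
      refine ⟨w, k, hw, ?_, hwu, hwl, fun j hj => hwn j (by omega)⟩
      rw [sum_range_succ, hsum, hwn n le_rfl]
      omega
    · set w := fun j => if j < n then u j else if j = n then N - ∑ i ∈ range n, u i else l j
      have hw_lt : ∀ j < n, w j = u j := fun j hj => if_pos hj
      have hw_gt : ∀ j > n, w j = l j := fun j hj => by simp [w, hj.ne', hj.not_gt]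
      have hw_n : w n = N - ∑ i ∈ range n, u i := by simp [w]
      refine ⟨w, n, fun j => ?_, ?_, hw_lt, hw_gt, hw_gt⟩
      · rcases lt_trichotomy j n with hj | rfl | hj
        · rw [hw_lt j hj]
          exact ⟨hlu j, le_rfl⟩
        · omega
        · rw [hw_gt j hj]
          exact ⟨le_rfl, hlu j⟩
      · have hsum : ∑ j ∈ range n, w j = ∑ j ∈ range n, u j :=
          sum_congr rfl fun j hj => hw_lt j (mem_range.1 hj)
        rw [sum_range_succ, hsum, hw_n]
        omega

end Sums

section RowOffsets

variable (a : List ℕ)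

lemma rowOffset_eq_sum_getD (m : ℕ) : rowOffset a m = ∑ j ∈ range m, a.getD j 0 :=
  sum_take_eq_sum_getD a m

lemma rowOffset_succ (i : ℕ) : rowOffset a (i + 1) = rowOffset a i + a.getD i 0 := by
  simp only [rowOffset_eq_sum_getD, sum_range_succ]

lemma rowOffset_mono : Monotone (rowOffset a) :=
  monotone_nat_of_le_succ fun i => by rw [rowOffset_succ]; omega

lemma rowOffset_add_sum_drop (i : ℕ) : rowOffset a i + (a.drop i).sum = a.sum := by
  rw [rowOffset, ← List.sum_append, List.take_append_drop]

lemma rowOffset_le_sum (i : ℕ) : rowOffset a i ≤ a.sum :=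
  (Nat.le_add_right _ _).trans_eq (rowOffset_add_sum_drop a i)

variable {a}

lemma rowOffset_of_length_le {i : ℕ} (hi : a.length ≤ i) : rowOffset a i = a.sum := by
  rw [rowOffset, List.take_of_length_le hi]

lemma rowOffset_append_singleton {i : ℕ} (hi : i ≤ a.length) (x : ℕ) :
    rowOffset (a ++ [x]) i = rowOffset a i := by
  rw [rowOffset, rowOffset, List.take_append_of_le_length hi]

lemma PartsGE.of_append {b : List ℕ} {m : ℕ} (h : PartsGE (a ++ b) m) : PartsGE a m :=
  fun y hy => h y (List.mem_append_left _ hy)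

lemma rowOffset_add_two_mul_le (h2 : PartsGE a 2) (i : ℕ) :
    rowOffset a i + 2 * (a.length - i) ≤ a.sum := by
  have hdrop := (a.drop i).card_nsmul_le_sum 2 fun x hx => h2 x (List.mem_of_mem_drop hx)
  have := rowOffset_add_sum_drop a i
  rw [List.length_drop, smul_eq_mul] at hdrop
  omega

lemma exists_row_of_lt_rowOffset {t m : ℕ} (ht : t < rowOffset a m) :
    ∃ i < m, ∃ k < a.getD i 0, t = rowOffset a i + k := by
  induction m with
  | zero => simp [rowOffset] at ht
  | succ m ih =>
    rcases lt_or_ge t (rowOffset a m) with htm | htm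
    · obtain ⟨i, hi, hik⟩ := ih htm
      exact ⟨i, by omega, hik⟩
    · rw [rowOffset_succ] at ht
      exact ⟨m, by omega, t - rowOffset a m, by omega, by omega⟩

end RowOffsets

section Overlaps

/-- The number of overlapping gaps between consecutive rows among the rows `i, …, n - 1` of a
ribbon with gap pattern `ov`.  For `ov = ovOf p` and `n = ℓ(a)` this is the entry `p_{i+1}`. -/
def overlapsFrom (ov : ℕ → Bool) (n i : ℕ) : ℕ := #{j ∈ Ico i (n - 1) | ov j = true}

variable (ov : ℕ → Bool)

lemma overlapsFrom_le (n i : ℕ) : overlapsFrom ov n i ≤ n - 1 - i :=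
  (card_filter_le _ _).trans_eq (Nat.card_Ico _ _)

lemma overlapsFrom_antitone (n : ℕ) : Antitone (overlapsFrom ov n) := fun _ _ hij =>
  card_le_card (filter_subset_filter _ (Ico_subset_Ico_left hij))

lemma overlapsFrom_succ_left {n i : ℕ} (hi : i + 1 < n) :
    overlapsFrom ov n i = overlapsFrom ov n (i + 1) + if ov i = true then 1 else 0 := by
  rw [overlapsFrom, overlapsFrom, ← insert_Ico_add_one_left_eq_Ico (by omega : i < n - 1),
    filter_insert]
  split_ifs
  · rw [card_insert_of_notMem (by simp)]
  · rfl

lemma overlapsFrom_succ_right (n i : ℕ) :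
    overlapsFrom ov (n + 1) i =
      overlapsFrom ov n i + if i < n ∧ ov (n - 1) = true then 1 else 0 := by
  rcases lt_or_ge i n with hi | hi
  · obtain ⟨m, rfl⟩ : ∃ m, n = m + 1 := ⟨n - 1, by omega⟩
    simp only [overlapsFrom, Nat.add_sub_cancel, hi, true_and]
    rw [← insert_Ico_right_eq_Ico_add_one (by omega), filter_insert]
    split_ifs
    · rw [card_insert_of_notMem (by simp)]
    · rfl
  · simp [overlapsFrom, hi.not_gt, Ico_eq_empty_of_le hi,
      Ico_eq_empty_of_le ((Nat.sub_le n 1).trans hi)]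

lemma IsOverlapSeq.getD_eq_overlapsFrom {a p : List ℕ} (hp : IsOverlapSeq a p) (i : ℕ) :
    p.getD i 0 = overlapsFrom (ovOf p) a.length i := by
  obtain ⟨hlen, hlast, hstep⟩ := hp
  induction hd : a.length - 1 - i generalizing i with
  | zero =>
    have : overlapsFrom (ovOf p) a.length i = 0 := by
      have := overlapsFrom_le (ovOf p) a.length i
      omega
    rw [this]
    rcases lt_or_ge i a.length with hi | hi
    · rwa [show i = a.length - 1 by omega]
    · exact List.getD_eq_default _ _ (hlen ▸ hi)
  | succ d ih =>
    rw [overlapsFrom_succ_left _ (by omega), ← ih (i + 1) (by omega)]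
    have := hstep i (by omega)
    simp only [ovOf, decide_eq_true_eq]
    split_ifs <;> omega

lemma IsOverlapSeq.antitone {a p : List ℕ} (hp : IsOverlapSeq a p) :
    Antitone fun i => p.getD i 0 := by
  simpa only [hp.getD_eq_overlapsFrom] using overlapsFrom_antitone (ovOf p) a.length

/-- The largest size that part `i` of a partition in the support of the ribbon `(a, ov)` can have:
the rows `i, …, ℓ(a) - 1` carry all letters `i + 1`, and every overlap among them forbids one. -/
def rowCap (a : List ℕ) (ov : ℕ → Bool) (i : ℕ) : ℕ :=
  (a.drop i).sum - overlapsFrom ov a.length i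

variable {ov}

lemma rowCap_add {a : List ℕ} (h2 : PartsGE a 2) (i : ℕ) :
    rowCap a ov i + overlapsFrom ov a.length i + rowOffset a i = a.sum := by
  have := rowOffset_add_sum_drop a i
  have := rowOffset_add_two_mul_le h2 i
  have := overlapsFrom_le ov a.length i
  rw [rowCap]
  omega

lemma rowCap_of_length_le {a : List ℕ} {i : ℕ} (hi : a.length ≤ i) : rowCap a ov i = 0 := by
  simp [rowCap, List.drop_of_length_le hi]

lemma rowCap_append_singleton {a : List ℕ} {x : ℕ} (h2 : PartsGE (a ++ [x]) 2) {i : ℕ}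
    (hi : i ≤ a.length) :
    rowCap (a ++ [x]) ov i + (if i < a.length ∧ ov (a.length - 1) = true then 1 else 0) =
      rowCap a ov i + x := by
  have hx := rowCap_add (ov := ov) h2 i
  have ha := rowCap_add (ov := ov) h2.of_append i
  rw [List.length_append, List.length_singleton, overlapsFrom_succ_right,
    rowOffset_append_singleton hi, List.sum_append, List.sum_singleton] at hx
  omega

end Overlaps

section Admissible

/-- The inequalities that single out the support of the ribbon `(a, ov)`, for a partition `v`
written as a function of the row index: `v` has size `|a|`, it dominates `a`, and no part exceeds
its `rowCap`. -/
structure Admissible (a : List ℕ) (ov : ℕ → Bool) (v : ℕ → ℕ) : Prop where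
  antitone : Antitone v
  sum_eq : ∑ j ∈ range a.length, v j = a.sum
  rowOffset_le : ∀ m, rowOffset a m ≤ ∑ j ∈ range m, v j
  le_rowCap : ∀ i, v i ≤ rowCap a ov i

variable {a : List ℕ} {ov : ℕ → Bool} {v : ℕ → ℕ}

lemma Admissible.eq_zero_of_length_le (hv : Admissible a ov v) {i : ℕ} (hi : a.length ≤ i) :
    v i = 0 :=
  Nat.le_zero.1 ((hv.le_rowCap i).trans_eq (rowCap_of_length_le hi))

lemma Admissible.sum_range_eq (hv : Admissible a ov v) {m : ℕ} (hm : v m = 0) :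
    ∑ j ∈ range m, v j = a.sum := by
  rw [← hv.sum_eq]
  rcases le_total m a.length with h | h
  · exact (sum_range_eq_of_antitone hv.antitone hm h).symm
  · exact sum_range_eq_of_antitone hv.antitone (hv.eq_zero_of_length_le le_rfl) h

lemma Admissible.sum_range_le (hv : Admissible a ov v) (m : ℕ) : ∑ j ∈ range m, v j ≤ a.sum :=
  (sum_le_sum_of_subset (range_subset_range.2 (le_max_right _ m))).trans_eq
    (hv.sum_range_eq (hv.eq_zero_of_length_le (le_max_left a.length m)))

lemma Admissible.rowOffset_add_le_sum (hv : Admissible a ov v) {i j : ℕ} (hij : i < j)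
    (hj : 0 < v j) : rowOffset a i + v i + (j - (i + 1)) + v j ≤ a.sum := by
  have hpos := sum_range_add_sub_le (u := v) (i := i + 1) (m := j) hij
    fun k hk => hj.trans_le (hv.antitone hk.le)
  have hdom := hv.rowOffset_le i
  have htotal := hv.sum_range_le (j + 1)
  rw [sum_range_succ] at hpos htotal
  omega

/-- The inequalities under which the ribbon has a filling with content `v` whose last row ends in a
letter at most `r`, so that a further row can start with the letter `r + 1` below an overlap.
Letter `r + 1` is the last one that occurs, and some other letter must reach the last row. -/
def IsAvoidable (a : List ℕ) (ov : ℕ → Bool) (v : ℕ → ℕ) (r : ℕ) : Prop :=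
  v (r + 1) = 0 ∧ (0 < v r → v r < v (r - 1) ∧ v r < rowCap a ov r)

lemma Admissible.isAvoidable_length (hv : Admissible a ov v) : IsAvoidable a ov v a.length :=
  ⟨hv.eq_zero_of_length_le (by omega), fun h => by simp [hv.eq_zero_of_length_le le_rfl] at h⟩

end Admissible

section Strip

variable {a : List ℕ} {x : ℕ} {ov : ℕ → Bool} {v : ℕ → ℕ} {r t : ℕ}

/-- Lower bounds for what is left of `v` once a row of length `x` is removed from the bottom of the
ribbon: the removed letters form a horizontal strip, and not all of them are `r + 1`. -/
def stripLower (v : ℕ → ℕ) (x r j : ℕ) : ℕ := if j = r then v r + 1 - x else v (j + 1)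

/-- Upper bounds for what is left of `v` once a row is removed from the bottom of the ribbon,
leaving the rows `a`: the parts respect `rowCap a ov`, and a letter `t + 1` is removed. -/
def stripUpper (a : List ℕ) (ov : ℕ → Bool) (v : ℕ → ℕ) (t j : ℕ) : ℕ :=
  min (v j) (rowCap a ov j) - if j = t then 1 else 0

lemma stripUpper_le : stripUpper a ov v t j ≤ v j ∧ stripUpper a ov v t j ≤ rowCap a ov j := by
  unfold stripUpper
  omega

lemma le_stripLower (hr : v (r + 1) = 0) (j : ℕ) : v (j + 1) ≤ stripLower v x r j := by
  unfold stripLower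
  split_ifs with hj <;> simp [*]

lemma rowOffset_add_add_two_mul_le (hs : (a ++ [x]).Pairwise (· ≥ ·)) (h2 : PartsGE a 2) {i : ℕ}
    (hi : i < a.length) : rowOffset a i + x + 2 * (a.length - (i + 1)) ≤ a.sum := by
  have hx : x ≤ a.getD i 0 :=
    le_getD_of_forall_mem (fun y hy => (List.pairwise_append.1 hs).2.2 y hy x (by simp)) hi
  have := rowOffset_add_two_mul_le h2 (i + 1)
  rw [rowOffset_succ] at this
  omega

lemma Admissible.succ_le_rowCap (hv : Admissible (a ++ [x]) ov v)
    (hs : (a ++ [x]).Pairwise (· ≥ ·)) (h2 : PartsGE (a ++ [x]) 2) (j : ℕ) :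
    v (j + 1) ≤ rowCap a ov j := by
  rcases lt_or_ge j a.length with hj | hj
  · have htotal := hv.sum_range_le (j + 1 + 1)
    have hdom := hv.rowOffset_le j
    have hanti := hv.antitone (Nat.le_add_right j 1)
    have hrest := rowOffset_add_add_two_mul_le hs h2.of_append hj
    have hcap := rowCap_add (ov := ov) h2.of_append j
    have hP := overlapsFrom_le ov a.length j
    rw [sum_range_succ, sum_range_succ, List.sum_append, List.sum_singleton] at htotal
    rw [rowOffset_append_singleton hj.le] at hdom
    omega
  · simp [hv.eq_zero_of_length_le (i := j + 1) (by simpa using hj)]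

lemma Admissible.le_stripUpper_self (hv : Admissible (a ++ [x]) ov v)
    (h2 : PartsGE (a ++ [x]) 2) (hr : IsAvoidable (a ++ [x]) ov v r)
    (hov : t < a.length → ov (a.length - 1) = true) : v r + 1 - x ≤ stripUpper a ov v t r := by
  have hx : 2 ≤ x := h2 x (by simp)
  rcases Nat.eq_zero_or_pos (v r) with h0 | h0
  · omega
  have hrL : r ≤ a.length := by
    by_contra! h
    exact h0.ne' (hv.eq_zero_of_length_le (by simpa using h))
  have hlt := (hr.2 h0).2
  have hcap := rowCap_append_singleton (ov := ov) h2 hrL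
  unfold stripUpper
  rcases hrL.lt_or_eq with hrL | rfl
  · rcases eq_or_ne r t with rfl | hrt
    · rw [if_pos ⟨hrL, hov hrL⟩] at hcap
      rw [if_pos rfl]
      omega
    · rw [if_neg hrt]
      split_ifs at hcap <;> omega
  · rw [rowCap_of_length_le le_rfl] at hcap
    omega

lemma Admissible.stripLower_le_stripUpper (hv : Admissible (a ++ [x]) ov v)
    (hs : (a ++ [x]).Pairwise (· ≥ ·)) (h2 : PartsGE (a ++ [x]) 2)
    (hr : IsAvoidable (a ++ [x]) ov v r) (ht : v (t + 1) = 0)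
    (hov : t < a.length → ov (a.length - 1) = true) (j : ℕ) :
    stripLower v x r j ≤ stripUpper a ov v t j := by
  rcases eq_or_ne j r with rfl | hjr
  · rw [stripLower, if_pos rfl]
    exact hv.le_stripUpper_self h2 hr hov
  rw [stripLower, if_neg hjr]
  rcases eq_or_ne j t with rfl | hjt
  · simp [ht]
  · rw [stripUpper, if_neg hjt]
    exact le_min (hv.antitone (Nat.le_add_right j 1)) (hv.succ_le_rowCap hs h2 j)

lemma Admissible.sum_stripLower_add_sum_le (hv : Admissible (a ++ [x]) ov v) {m : ℕ}
    (hm : m ≤ a.length) :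
    ∑ j ∈ Ico m a.length, stripLower v x r j + ∑ j ∈ range (m + 1), v j ≤
      a.sum + x + if m ≤ r then v r + 1 - x else 0 := by
  have hterm : ∀ j ∈ Ico m a.length,
      stripLower v x r j ≤ v (j + 1) + if j = r then v r + 1 - x else 0 := fun j _ => by
    unfold stripLower
    split_ifs <;> omega
  have hsum := sum_le_sum hterm
  rw [sum_add_distrib, sum_ite_eq'] at hsum
  have htotal := hv.sum_range_le (a.length + 1)
  rw [List.sum_append, List.sum_singleton, ← sum_range_add_sum_Ico _ (by omega : m + 1 ≤ _),
    ← sum_Ico_add' v m a.length 1] at htotal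
  simp only [mem_Ico] at hsum
  split_ifs at hsum ⊢ <;> omega

lemma Admissible.sum_stripLower_add_rowOffset_le (hv : Admissible (a ++ [x]) ov v)
    (hs : (a ++ [x]).Pairwise (· ≥ ·)) (h2 : PartsGE (a ++ [x]) 2)
    (hr : IsAvoidable (a ++ [x]) ov v r) {m : ℕ} (hm : m ≤ a.length) :
    ∑ j ∈ Ico m a.length, stripLower v x r j + rowOffset a m ≤ a.sum := by
  rcases hm.eq_or_lt with rfl | hm
  · simpa using rowOffset_le_sum a a.length
  have hsum := hv.sum_stripLower_add_sum_le (r := r) hm.le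
  have hx : x ≤ a.getD m 0 :=
    le_getD_of_forall_mem (fun y hy => (List.pairwise_append.1 hs).2.2 y hy x (by simp)) hm
  have hdom := hv.rowOffset_le m
  have hdom_succ := hv.rowOffset_le (m + 1)
  rw [rowOffset_append_singleton hm.le] at hdom
  rw [rowOffset_append_singleton (Nat.succ_le_of_lt hm), rowOffset_succ] at hdom_succ
  rcases Nat.eq_zero_or_pos (v r) with h0 | h0
  · have : 2 ≤ x := h2 x (by simp)
    split_ifs at hsum <;> omega
  obtain ⟨hlt_prev, hlt_cap⟩ := hr.2 h0
  rcases lt_trichotomy m r with hmr | rfl | hmr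
  · have := hv.antitone (Nat.le_sub_one_of_lt hmr)
    rw [if_pos hmr.le] at hsum
    rw [sum_range_succ] at hsum hdom_succ
    omega
  · have hcap := rowCap_add (ov := ov) h2 m
    have hoff := rowOffset_le_sum a m
    rw [if_pos le_rfl, hv.sum_range_eq hr.1] at hsum
    rw [rowOffset_append_singleton hm.le] at hcap
    rw [List.sum_append, List.sum_singleton] at hsum hcap
    omega
  · rw [if_neg hmr.not_ge] at hsum
    omega

lemma Admissible.le_rowCap_of_lt (hv : Admissible (a ++ [x]) ov v)
    (hs : (a ++ [x]).Pairwise (· ≥ ·)) (h2 : PartsGE a 2) {i j : ℕ} (hij : i < j)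
    (hj : j < a.length) (hi : rowCap a ov i < v i) : v j ≤ rowCap a ov j := by
  by_contra! hvj
  have htotal := hv.rowOffset_add_le_sum hij (by omega)
  have hrest := rowOffset_add_add_two_mul_le hs h2 hj
  have hcap_i := rowCap_add (ov := ov) h2 i
  have hcap_j := rowCap_add (ov := ov) h2 j
  have hP_i := overlapsFrom_le ov a.length i
  have hP_j := overlapsFrom_le ov a.length j
  rw [List.sum_append, List.sum_singleton, rowOffset_append_singleton (by omega)] at htotal
  omega

lemma Admissible.sub_rowCap_add_le (hv : Admissible (a ++ [x]) ov v)
    (h2 : PartsGE (a ++ [x]) 2) {i : ℕ} (hi : i < a.length) (hvi : rowCap a ov i < v i) :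
    v i - rowCap a ov i + v a.length ≤ x := by
  have hcap := rowCap_append_singleton (ov := ov) h2 hi.le
  have hle := hv.le_rowCap i
  rcases Nat.eq_zero_or_pos (v a.length) with h0 | h0
  · omega
  have htotal := hv.rowOffset_add_le_sum hi h0
  have hcap_i := rowCap_add (ov := ov) h2.of_append i
  have hP := overlapsFrom_le ov a.length i
  rw [List.sum_append, List.sum_singleton, rowOffset_append_singleton hi.le] at htotal
  omega

lemma Admissible.sum_sub_rowCap_le (hv : Admissible (a ++ [x]) ov v)
    (hs : (a ++ [x]).Pairwise (· ≥ ·)) (h2 : PartsGE (a ++ [x]) 2) (ht : v (t + 1) = 0)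
    (hov : t < a.length → ov (a.length - 1) = true) :
    ∑ j ∈ range a.length, (v j - rowCap a ov j) + v a.length + (if t < a.length then 1 else 0) ≤
      x := by
  have hx : 2 ≤ x := h2 x (by simp)
  have hvL : v a.length ≤ x := by
    have := hv.le_rowCap a.length
    have := rowCap_append_singleton (ov := ov) h2 le_rfl
    have := rowCap_of_length_le (ov := ov) (le_refl a.length)
    omega
  have hvL0 : t < a.length → v a.length = 0 := fun htL => Nat.le_zero.1 (ht ▸ hv.antitone htL)
  by_cases hex : ∃ i < a.length, rowCap a ov i < v i
  · obtain ⟨i, hi, hvi⟩ := hex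
    rw [sum_eq_single_of_mem i (mem_range.2 hi) fun j hj hji => ?_]
    · have := hv.sub_rowCap_add_le h2 hi hvi
      have := hv.le_rowCap i
      have := rowCap_append_singleton (ov := ov) h2 hi.le
      split_ifs with htL
      · rw [if_pos ⟨hi, hov htL⟩] at this
        have := hvL0 htL
        omega
      · omega
    · refine Nat.sub_eq_zero_of_le ?_
      rcases hji.lt_or_gt with hji | hij
      · by_contra! hvj
        exact hvi.not_ge (hv.le_rowCap_of_lt hs h2.of_append hji hi hvj)
      · exact hv.le_rowCap_of_lt hs h2.of_append hij (mem_range.1 hj) hvi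
  · push Not at hex
    rw [sum_eq_zero fun j hj => Nat.sub_eq_zero_of_le (hex j (mem_range.1 hj))]
    split_ifs with htL
    · have := hvL0 htL
      omega
    · omega

lemma Admissible.sum_le_sum_stripUpper (hv : Admissible (a ++ [x]) ov v)
    (hs : (a ++ [x]).Pairwise (· ≥ ·)) (h2 : PartsGE (a ++ [x]) 2) (ht : v (t + 1) = 0)
    (hov : t < a.length → ov (a.length - 1) = true) :
    a.sum ≤ ∑ j ∈ range a.length, stripUpper a ov v t j := by
  have hterm : ∀ j ∈ range a.length, v j ≤
      stripUpper a ov v t j + (v j - rowCap a ov j) + if j = t then 1 else 0 := fun j _ => by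
    unfold stripUpper
    omega
  have hsum := sum_le_sum hterm
  have hexcess := hv.sum_sub_rowCap_le hs h2 ht hov
  have htotal := hv.sum_range_eq (m := a.length + 1) (hv.eq_zero_of_length_le (by simp))
  rw [sum_add_distrib, sum_add_distrib, sum_ite_eq'] at hsum
  rw [sum_range_succ, List.sum_append, List.sum_singleton] at htotal
  simp only [mem_range] at hsum
  omega

lemma rowOffset_le_sum_of_rowCap_le (h2 : PartsGE a 2) {w : ℕ → ℕ} (hw : Antitone w)
    (hsum : ∑ j ∈ range a.length, w j = a.sum) {i m : ℕ} (him : i < m) (hm : m ≤ a.length)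
    (hi : rowOffset a i ≤ ∑ j ∈ range i, w j) (hcap : rowCap a ov i ≤ w i) :
    rowOffset a m ≤ ∑ j ∈ range m, w j := by
  rcases Nat.eq_zero_or_pos (w (m - 1)) with h0 | h0
  · have hm1 := sum_range_eq_of_antitone hw h0 (Nat.sub_le m 1)
    have hmL := sum_range_eq_of_antitone hw h0 (by omega : m - 1 ≤ a.length)
    rw [hm1, ← hmL, hsum]
    exact rowOffset_le_sum a m
  · have hpos := sum_range_add_sub_le (u := w) (i := i + 1) (m := m) him
      fun k hk => h0.trans_le (hw (Nat.le_sub_one_of_lt hk))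
    have := rowCap_add (ov := ov) h2 i
    have := overlapsFrom_le ov a.length i
    have := rowOffset_add_two_mul_le h2 m
    rw [sum_range_succ] at hpos
    omega

/-- Either some part before `m` attains its `rowCap`, or `w` agrees with `v` before `m`, or `w`
attains its lower bounds from `m` on. -/
lemma Admissible.rowOffset_le_sum_greedy (hv : Admissible (a ++ [x]) ov v)
    (hs : (a ++ [x]).Pairwise (· ≥ ·)) (h2 : PartsGE (a ++ [x]) 2)
    (hr : IsAvoidable (a ++ [x]) ov v r) (ht : v (t + 1) = 0) {w : ℕ → ℕ} {k : ℕ}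
    (hw : Antitone w) (hwv : ∀ j, w j ≤ v j) (hsum : ∑ j ∈ range a.length, w j = a.sum)
    (hwu : ∀ j < k, w j = stripUpper a ov v t j) (hwl : ∀ j > k, w j = stripLower v x r j)
    {m : ℕ} (hm : m ≤ a.length) : rowOffset a m ≤ ∑ j ∈ range m, w j := by
  induction m using Nat.strong_induction_on with
  | _ m ih =>
  by_cases htight : ∃ i < m, rowCap a ov i ≤ w i
  · obtain ⟨i, him, hcap⟩ := htight
    exact rowOffset_le_sum_of_rowCap_le h2.of_append hw hsum him hm (ih i him (by omega)) hcap
  push Not at htight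
  rcases Nat.eq_zero_or_pos (v m) with h0 | h0
  · have hwm : w m = 0 := Nat.le_zero.1 (h0 ▸ hwv m)
    rw [← sum_range_eq_of_antitone hw hwm hm, hsum]
    exact rowOffset_le_sum a m
  rcases le_or_gt m k with hmk | hkm
  · have heq : ∀ j ∈ range m, w j = v j := fun j hj => by
      have hjm := mem_range.1 hj
      have hjt : j ≠ t := by
        rintro rfl
        exact h0.ne' (Nat.le_zero.1 (ht ▸ hv.antitone hjm))
      have := htight j hjm
      have := hwu j (by omega)
      rw [stripUpper, if_neg hjt] at this
      omega
    rw [sum_congr rfl heq, ← rowOffset_append_singleton hm x]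
    exact hv.rowOffset_le m
  · have htail := hv.sum_stripLower_add_rowOffset_le hs h2 hr hm
    have heq : ∑ j ∈ Ico m a.length, w j = ∑ j ∈ Ico m a.length, stripLower v x r j :=
      sum_congr rfl fun j hj => hwl j (hkm.trans_le (mem_Ico.1 hj).1)
    have := sum_range_add_sum_Ico w hm
    omega

lemma Admissible.exists_removed_letter (hv : Admissible (a ++ [x]) ov v)
    (h2 : PartsGE (a ++ [x]) 2) :
    ∃ t, v (t + 1) = 0 ∧ (t < a.length → ov (a.length - 1) = true) ∧
      (a ≠ [] → ov (a.length - 1) = true → 0 < v t) := by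
  by_cases hover : ov (a.length - 1) = true
  · have h0 : 0 < v 0 := by
      by_contra! h0
      have hsum := hv.sum_range_eq (Nat.le_zero.1 h0)
      have hx : 2 ≤ x := h2 x (by simp)
      rw [List.sum_append, List.sum_singleton, sum_range_zero] at hsum
      omega
    obtain ⟨t, ht, ht'⟩ := exists_last_pos h0 (hv.eq_zero_of_length_le le_rfl)
    exact ⟨t, ht', fun _ => hover, fun _ _ => ht⟩
  · exact ⟨a.length, hv.eq_zero_of_length_le (by simp), by simp, fun _ h => absurd h hover⟩

lemma Admissible.isAvoidable_strip (hv : Admissible (a ++ [x]) ov v)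
    (h2 : PartsGE (a ++ [x]) 2) (ht : v (t + 1) = 0)
    (hov : t < a.length → ov (a.length - 1) = true) {w : ℕ → ℕ}
    (hvw : ∀ j, v (j + 1) ≤ w j) (hwu : ∀ j, w j ≤ stripUpper a ov v t j) :
    IsAvoidable a ov w t := by
  have hwt := hwu t
  rw [stripUpper, if_pos rfl] at hwt
  refine ⟨Nat.le_zero.1 (ht ▸ (hwu (t + 1)).trans stripUpper_le.1), fun h0 => ?_⟩
  have htL : t < a.length := by
    by_contra! h
    rw [rowCap_of_length_le h] at hwt
    omega
  have ht0 : t ≠ 0 := by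
    rintro rfl
    have hsum := hv.sum_range_eq ht
    have hle := hv.le_rowCap 0
    have hcap := rowCap_append_singleton (ov := ov) h2 htL.le
    have hcap_a := rowCap_add (ov := ov) h2.of_append 0
    rw [if_pos ⟨htL, hov htL⟩] at hcap
    rw [sum_range_one, List.sum_append, List.sum_singleton] at hsum
    omega
  have := hvw (t - 1)
  rw [Nat.sub_add_cancel (by omega)] at this
  omega

/-- Otherwise all `x` letters would be removed from part `r`, against its lower bound. -/
lemma Admissible.exists_lt_of_stripLower_le (hv : Admissible (a ++ [x]) ov v)
    (hr : v (r + 1) = 0) {w : ℕ → ℕ} (hw : Admissible a ov w)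
    (hwr : stripLower v x r r ≤ w r) (hwv : ∀ j, w j ≤ v j) : ∃ j < r, w j < v j := by
  by_contra! hge
  have hsum := hv.sum_range_eq hr
  have hle := hw.sum_range_le (r + 1)
  have heq : ∑ j ∈ range r, w j = ∑ j ∈ range r, v j :=
    sum_congr rfl fun j hj => (hwv j).antisymm (hge j (mem_range.1 hj))
  rw [stripLower, if_pos rfl] at hwr
  rw [sum_range_succ, List.sum_append, List.sum_singleton] at hsum
  rw [sum_range_succ] at hle
  omega

lemma Admissible.exists_strip (hv : Admissible (a ++ [x]) ov v)
    (hs : (a ++ [x]).Pairwise (· ≥ ·)) (h2 : PartsGE (a ++ [x]) 2)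
    (hr : IsAvoidable (a ++ [x]) ov v r) :
    ∃ (w : ℕ → ℕ) (t : ℕ), Admissible a ov w ∧ IsAvoidable a ov w t ∧
      (∀ j, v (j + 1) ≤ w j ∧ w j ≤ v j) ∧ (∃ j < r, w j < v j) ∧
      (a ≠ [] → ov (a.length - 1) = true → w t < v t) := by
  obtain ⟨t, ht, hov, hpos⟩ := hv.exists_removed_letter h2
  obtain ⟨w, k, hw, hsum, hwu, hwl, -⟩ := exists_greedy_between (n := a.length) (N := a.sum)
    (hv.stripLower_le_stripUpper hs h2 hr ht hov)
    (by simpa [rowOffset] using hv.sum_stripLower_add_rowOffset_le hs h2 hr (Nat.zero_le _))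
    (hv.sum_le_sum_stripUpper hs h2 ht hov)
  have hvw : ∀ j, v (j + 1) ≤ w j := fun j => (le_stripLower hr.1 j).trans (hw j).1
  have hwv : ∀ j, w j ≤ v j := fun j => (hw j).2.trans stripUpper_le.1
  have hanti : Antitone w := antitone_nat_of_succ_le fun j => (hwv (j + 1)).trans (hvw j)
  have hdom {m : ℕ} (hm : m ≤ a.length) : rowOffset a m ≤ ∑ j ∈ range m, w j :=
    hv.rowOffset_le_sum_greedy hs h2 hr ht hanti hwv hsum hwu hwl hm
  have hadm : Admissible a ov w :=
    { antitone := hanti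
      sum_eq := hsum
      rowOffset_le := fun m => by
        rcases le_total m a.length with hm | hm
        · exact hdom hm
        · rw [rowOffset_of_length_le hm, ← hsum]
          exact sum_le_sum_of_subset (range_subset_range.2 hm)
      le_rowCap := fun j => (hw j).2.trans stripUpper_le.2 }
  refine ⟨w, t, hadm, hv.isAvoidable_strip h2 ht hov hvw fun j => (hw j).2,
    fun j => ⟨hvw j, hwv j⟩, hv.exists_lt_of_stripLower_le hr.1 hadm (hw r).1 hwv,
    fun ha hover => ?_⟩
  have := hpos ha hover
  have := (hw t).2
  rw [stripUpper, if_pos rfl] at this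
  omega

end Strip

section Words

/-- `HasContent` with the content written as a function: `w` has `v j` letters `j + 1` for
every `j`, and no other letters. -/
def HasLetterCounts (w : List ℕ) (v : ℕ → ℕ) : Prop :=
  (∀ j, w.count (j + 1) = v j) ∧ w.count 0 = 0

lemma HasLetterCounts.append {w b : List ℕ} {v c : ℕ → ℕ} (hw : HasLetterCounts w v)
    (hb : HasLetterCounts b c) : HasLetterCounts (w ++ b) (v + c) :=
  ⟨fun j => by rw [List.count_append, hw.1, hb.1, Pi.add_apply],
    by rw [List.count_append, hw.2, hb.2]⟩

lemma sum_count_eq_length {w : List ℕ} {m : ℕ} (hpos : w.count 0 = 0) (hw : ∀ y ∈ w, y ≤ m) :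
    ∑ j ∈ range m, w.count (j + 1) = w.length := by
  have hmem : ∀ y ∈ (w : Multiset ℕ), y ∈ range (m + 1) := by
    simpa [Nat.lt_succ_iff] using hw
  simpa [sum_range_succ', hpos] using Multiset.sum_count_eq_card hmem

lemma exists_pairwise_hasLetterCounts {c : ℕ → ℕ} {n : ℕ} (hc : ∀ j ≥ n, c j = 0) :
    ∃ b : List ℕ, b.Pairwise (· ≥ ·) ∧ HasLetterCounts b c ∧ b.length = ∑ j ∈ range n, c j := by
  refine ⟨(∑ j ∈ range n, Multiset.replicate (c j) (j + 1)).sort (· ≥ ·),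
    Multiset.pairwise_sort _ _, ⟨fun j => ?_, ?_⟩, ?_⟩
  · rw [← Multiset.coe_count, Multiset.sort_eq, Multiset.count_sum']
    simpa [Multiset.count_replicate, eq_comm (b := j)] using fun h => (hc j h).symm
  · rw [← Multiset.coe_count, Multiset.sort_eq, Multiset.count_sum']
    simp [Multiset.count_replicate]
  · simp [Multiset.length_sort]

lemma getD_last_le_and_le_getD_zero {b : List ℕ} (hb : b.Pairwise (· ≥ ·)) {y : ℕ}
    (hy : y ∈ b) :
    b.getD (b.length - 1) 0 ≤ y ∧ y ≤ b.getD 0 0 := by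
  obtain ⟨i, hi, rfl⟩ := List.getElem_of_mem hy
  rw [← List.getD_eq_getElem b 0 hi]
  exact ⟨antitone_getD_of_pairwise hb (by omega), antitone_getD_of_pairwise hb (Nat.zero_le i)⟩

lemma getD_append_last (w : List ℕ) {b : List ℕ} (hb : 0 < b.length) :
    (w ++ b).getD (w.length + b.length - 1) 0 = b.getD (b.length - 1) 0 := by
  rw [List.getD_append_right _ _ _ _ (by omega), Nat.add_sub_assoc hb, Nat.add_sub_cancel_left]

lemma IsRibbonWord.append {a w b : List ℕ} {ov : ℕ → Bool} (hw : IsRibbonWord a ov w)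
    (ha : PartsGE a 1) (hb : b.Pairwise (· ≥ ·))
    (hover : a ≠ [] → ov (a.length - 1) = true → w.getD (a.sum - 1) 0 < b.getD 0 0) :
    IsRibbonWord (a ++ [b.length]) ov (w ++ b) := by
  obtain ⟨hlen, hrow, hgap⟩ := hw
  have hend : rowOffset a a.length = a.sum := rowOffset_of_length_le le_rfl
  refine ⟨by simp [hlen], fun i j hi hj => ?_, fun i hi hov => ?_⟩
  · have hi : i < a.length + 1 := by simpa using hi
    rw [rowOffset_append_singleton (by omega)]
    rcases Nat.lt_succ_iff_lt_or_eq.1 hi with hi | rfl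
    · rw [List.getD_append _ _ _ _ hi] at hj
      have := rowOffset_succ a i
      have := rowOffset_le_sum a (i + 1)
      rw [List.getD_append _ _ _ _ (by omega), List.getD_append _ _ _ _ (by omega)]
      exact hrow i j hi hj
    · rw [hend, List.getD_append_right _ _ _ _ (by omega),
        List.getD_append_right _ _ _ _ (by omega)]
      exact antitone_getD_of_pairwise hb (by omega)
  · have hi : i < a.length := by simpa using hi
    have hpos : 0 < a.getD i 0 := le_getD_of_forall_mem ha hi
    have hoff := rowOffset_succ a i
    have hle := rowOffset_le_sum a (i + 1)
    rw [rowOffset_append_singleton (by omega : i + 1 ≤ a.length),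
      List.getD_append _ _ _ _ (by omega)]
    rcases (by omega : i + 1 ≤ a.length).lt_or_eq with hi' | hi'
    · have := rowOffset_succ a (i + 1)
      have := rowOffset_le_sum a (i + 1 + 1)
      have : 0 < a.getD (i + 1) 0 := le_getD_of_forall_mem ha hi'
      rw [List.getD_append _ _ _ _ (by omega)]
      exact hgap i hi' hov
    · rw [hi', hend, List.getD_append_right _ _ _ _ hlen.le, hlen, Nat.sub_self]
      exact hover (List.ne_nil_of_length_pos (by omega)) (by simpa [← hi'] using hov)

lemma IsYam.append {w b : List ℕ} (hw : IsYam w)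
    (hb : ∀ j, (w ++ b).count (j + 2) ≤ w.count (j + 1)) : IsYam (w ++ b) := by
  intro k j
  rcases le_total k w.length with hk | hk
  · rw [List.take_append_of_le_length hk]
    exact hw k j
  · calc ((w ++ b).take k).count (j + 2) ≤ (w ++ b).count (j + 2) :=
          (List.take_sublist _ _).count_le _
      _ ≤ w.count (j + 1) := hb j
      _ ≤ ((w ++ b).take k).count (j + 1) := by
          rw [List.take_append, List.take_of_length_le hk, List.count_append]
          omega

lemma Admissible.exists_word {a : List ℕ} {ov : ℕ → Bool} (hs : a.Pairwise (· ≥ ·))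
    (h2 : PartsGE a 2) {v : ℕ → ℕ} {r : ℕ} (hv : Admissible a ov v)
    (hr : IsAvoidable a ov v r) :
    ∃ w, IsRibbonWord a ov w ∧ IsYam w ∧ HasLetterCounts w v ∧ w.getD (a.sum - 1) 0 ≤ r := by
  induction a using List.reverseRecOn generalizing v r with
  | nil =>
    exact ⟨[], by simp [IsRibbonWord], by simp [IsYam],
      ⟨fun j => by simp [hv.eq_zero_of_length_le (Nat.zero_le j)], by simp⟩, by simp⟩
  | append_singleton a x ih =>
    obtain ⟨u, t, hu, ht, huv, ⟨j, hjr, hj⟩, hover⟩ := hv.exists_strip hs h2 hr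
    obtain ⟨w, hrib, hyam, hcount, hlast⟩ := ih (List.pairwise_append.1 hs).1 h2.of_append hu ht
    obtain ⟨b, hb, hbcount, hblen⟩ := exists_pairwise_hasLetterCounts (c := v - u)
      (n := a.length + 1) fun j hj => by
        simp [hv.eq_zero_of_length_le (i := j) (by simpa using hj)]
    have huv_le : u ≤ v := fun j => (huv j).2
    have hx : b.length = x := by
      have hv_sum := hv.sum_range_eq (m := a.length + 1) (hv.eq_zero_of_length_le (by simp))
      have hu_sum := hu.sum_range_eq (m := a.length + 1) (hu.eq_zero_of_length_le (by omega))
      simp only [hblen, Pi.sub_apply]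
      rw [sum_tsub_distrib _ fun j _ => huv_le j, hv_sum, hu_sum]
      simp
    subst hx
    have hwb : HasLetterCounts (w ++ b) v :=
      add_tsub_cancel_of_le huv_le ▸ hcount.append hbcount
    have hmem {j : ℕ} (hj : u j < v j) : j + 1 ∈ b :=
      List.count_pos_iff.1 ((Nat.sub_pos_of_lt hj).trans_eq (hbcount.1 j).symm)
    refine ⟨w ++ b, hrib.append (fun y hy => (h2.of_append y hy).trans' one_le_two) hb
      fun ha hov => ?_, hyam.append fun j => ?_, hwb, ?_⟩
    · have := (getD_last_le_and_le_getD_zero hb (hmem (hover ha hov))).2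
      omega
    · rw [hwb.1 (j + 1), hcount.1]
      exact (huv j).1
    · have := (getD_last_le_and_le_getD_zero hb (hmem hj)).1
      rw [List.sum_append, List.sum_singleton, ← hrib.1,
        getD_append_last w (List.length_pos_of_mem (hmem hj))]
      omega

end Words

section WordBounds

variable {a w : List ℕ} {ov : ℕ → Bool}

lemma exists_getD_eq_of_mem_take {m c : ℕ} (hc : c ∈ w.take m) :
    ∃ s < m, w.getD s 0 = c := by
  obtain ⟨s, hs, rfl⟩ := List.mem_take_iff_getElem.1 hc
  exact ⟨s, by omega, List.getD_eq_getElem _ _ (by omega)⟩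

lemma IsYam.exists_lt (hw : IsYam w) {t j : ℕ} (ht : w.getD t 0 = j + 2) :
    ∃ s < t, w.getD s 0 = j + 1 := by
  have htw : t < w.length := by
    by_contra! h
    rw [List.getD_eq_default _ _ h] at ht
    omega
  rw [List.getD_eq_getElem _ _ htw] at ht
  have hpos : 0 < (w.take (t + 1)).count (j + 2) :=
    List.count_pos_iff.2 (List.mem_take_iff_getElem.2 ⟨t, by omega, ht⟩)
  obtain ⟨s, hs, hsj⟩ :=
    exists_getD_eq_of_mem_take (List.count_pos_iff.1 (hpos.trans_le (hw (t + 1) j)))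
  refine ⟨s, lt_of_le_of_ne (by omega) ?_, hsj⟩
  rintro rfl
  rw [List.getD_eq_getElem _ _ htw] at hsj
  omega

lemma IsRibbonWord.getD_le_getD_rowOffset (hw : IsRibbonWord a ov w) {i k : ℕ}
    (hi : i < a.length) (hk : k < a.getD i 0) :
    w.getD (rowOffset a i + k) 0 ≤ w.getD (rowOffset a i) 0 := by
  induction k with
  | zero => rfl
  | succ k ih => exact (hw.2.1 i k hi hk).trans (ih (by omega))

lemma IsRibbonWord.getD_le (hw : IsRibbonWord a ov w) (hy : IsYam w) {m t : ℕ}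
    (ht : t < rowOffset a m) : w.getD t 0 ≤ m := by
  induction m using Nat.strong_induction_on generalizing t with
  | _ m ih =>
  obtain ⟨i, him, k, hk, rfl⟩ := exists_row_of_lt_rowOffset ht
  have hi : i < a.length := by
    by_contra! h
    rw [List.getD_eq_default _ _ h] at hk
    omega
  have hfirst : w.getD (rowOffset a i) 0 ≤ i + 1 := by
    by_contra! hlt
    obtain ⟨s, hs, hsj⟩ :=
      hy.exists_lt (t := rowOffset a i) (j := w.getD (rowOffset a i) 0 - 2) (by omega)
    have := ih i him hs
    omega
  have := hw.getD_le_getD_rowOffset hi hk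
  omega

lemma IsRibbonWord.rowOffset_le_sum_count (hw : IsRibbonWord a ov w) (hy : IsYam w)
    (h0 : w.count 0 = 0) (m : ℕ) : rowOffset a m ≤ ∑ j ∈ range m, w.count (j + 1) := by
  have hsub := List.take_sublist (rowOffset a m) w
  calc rowOffset a m = (w.take (rowOffset a m)).length := by
        rw [List.length_take, hw.1, min_eq_left (rowOffset_le_sum a m)]
    _ = ∑ j ∈ range m, (w.take (rowOffset a m)).count (j + 1) :=
        (sum_count_eq_length (Nat.le_zero.1 ((hsub.count_le 0).trans_eq h0)) fun y hy' => by
          obtain ⟨s, hs, rfl⟩ := exists_getD_eq_of_mem_take hy'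
          exact hw.getD_le hy hs).symm
    _ ≤ ∑ j ∈ range m, w.count (j + 1) := sum_le_sum fun j _ => hsub.count_le _

lemma count_eq_card_filter_range (w : List ℕ) (c : ℕ) :
    w.count c = #{t ∈ range w.length | w.getD t 0 = c} := by
  induction w using List.reverseRecOn with
  | nil => simp
  | append_singleton w y ih =>
    have heq : {t ∈ range w.length | (w ++ [y]).getD t 0 = c} =
        {t ∈ range w.length | w.getD t 0 = c} :=
      filter_congr fun t ht => by rw [List.getD_append _ _ _ _ (mem_range.1 ht)]
    rw [List.count_append, ih, List.length_append, List.length_singleton, range_add_one,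
      filter_insert, heq, List.getD_append_right _ _ _ _ le_rfl]
    by_cases hy : y = c <;> simp [hy]

/-- A position next to the gap below row `j` that does not carry the letter `c` when this gap is an
overlap. -/
def avoidingPos (a w : List ℕ) (c j : ℕ) : ℕ :=
  if w.getD (rowOffset a (j + 1)) 0 = c then rowOffset a (j + 1) - 1 else rowOffset a (j + 1)

lemma avoidingPos_bounds (a w : List ℕ) (c j : ℕ) :
    rowOffset a (j + 1) - 1 ≤ avoidingPos a w c j ∧ avoidingPos a w c j ≤ rowOffset a (j + 1) := by
  unfold avoidingPos
  split_ifs <;> omega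

lemma avoidingPos_lt_avoidingPos (h2 : PartsGE a 2) (c : ℕ) {i j : ℕ} (hij : i < j)
    (hj : j + 1 < a.length) : avoidingPos a w c i < avoidingPos a w c j := by
  have := avoidingPos_bounds a w c i
  have := avoidingPos_bounds a w c j
  have := rowOffset_succ a (i + 1)
  have : 2 ≤ a.getD (i + 1) 0 := le_getD_of_forall_mem h2 (by omega)
  have := rowOffset_mono a (by omega : i + 1 + 1 ≤ j + 1)
  omega

lemma IsRibbonWord.getD_avoidingPos_ne (hw : IsRibbonWord a ov w) (c : ℕ) {j : ℕ}
    (hj : j + 1 < a.length) (hov : ov j = true) : w.getD (avoidingPos a w c j) 0 ≠ c := by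
  have := hw.2.2 j hj hov
  unfold avoidingPos
  split_ifs with h
  · omega
  · exact h

lemma IsRibbonWord.overlapsFrom_le_card (hw : IsRibbonWord a ov w) (h2 : PartsGE a 2)
    (c i : ℕ) :
    overlapsFrom ov a.length i ≤ #{t ∈ Ico (rowOffset a i) a.sum | ¬w.getD t 0 = c} := by
  have hgap : ∀ j ∈ ({j ∈ Ico i (a.length - 1) | ov j = true} : Finset ℕ),
      i ≤ j ∧ j + 1 < a.length ∧ ov j = true := fun j hj => by
    rw [mem_filter, mem_Ico] at hj
    exact ⟨hj.1.1, by omega, hj.2⟩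
  refine card_le_card_of_injOn (avoidingPos a w c) (fun j hj => ?_) ?_
  · obtain ⟨hij, hjL, hov⟩ := hgap j hj
    have := avoidingPos_bounds a w c j
    have := rowOffset_mono a hij
    have hsucc := rowOffset_succ a j
    have hsucc' := rowOffset_succ a (j + 1)
    have := rowOffset_le_sum a (j + 1 + 1)
    have : 2 ≤ a.getD j 0 := le_getD_of_forall_mem h2 (by omega)
    have : 2 ≤ a.getD (j + 1) 0 := le_getD_of_forall_mem h2 hjL
    rw [mem_coe, mem_filter, mem_Ico]
    exact ⟨by omega, hw.getD_avoidingPos_ne c hjL hov⟩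
  · have hmono : StrictMonoOn (avoidingPos a w c)
        ({j ∈ Ico i (a.length - 1) | ov j = true} : Finset ℕ) :=
      fun j _ k hk hjk => avoidingPos_lt_avoidingPos h2 c hjk (hgap k hk).2.1
    exact hmono.injOn

lemma IsRibbonWord.count_le_rowCap (hw : IsRibbonWord a ov w) (hy : IsYam w)
    (h2 : PartsGE a 2) (i : ℕ) : w.count (i + 1) ≤ rowCap a ov i := by
  have hcount : w.count (i + 1) = #{t ∈ Ico (rowOffset a i) a.sum | w.getD t 0 = i + 1} := by
    rw [count_eq_card_filter_range, hw.1]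
    congr 1
    ext t
    simp only [mem_filter, mem_range, mem_Ico]
    refine ⟨fun ⟨ht, hti⟩ => ⟨⟨?_, ht⟩, hti⟩, fun ⟨ht, hti⟩ => ⟨ht.2, hti⟩⟩
    by_contra! hlt
    have := hw.getD_le hy hlt
    omega
  have hfree := hw.overlapsFrom_le_card h2 (i + 1) i
  have htotal := card_filter_add_card_filter_not (s := Ico (rowOffset a i) a.sum)
    (fun t => w.getD t 0 = i + 1)
  have hcap := rowCap_add (ov := ov) h2 i
  rw [Nat.card_Ico] at htotal
  omega

lemma IsRibbonWord.admissible (hw : IsRibbonWord a ov w) (hy : IsYam w) (h2 : PartsGE a 2)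
    {v : ℕ → ℕ} (hv : HasLetterCounts w v) : Admissible a ov v where
  antitone := antitone_nat_of_succ_le fun j => by
    simpa [hv.1] using hy w.length j
  sum_eq := by
    simp only [← hv.1]
    rw [← hw.1]
    refine sum_count_eq_length hv.2 fun y hy' => ?_
    obtain ⟨s, hs, rfl⟩ := exists_getD_eq_of_mem_take (w.take_length.symm ▸ hy')
    exact hw.getD_le hy (by rwa [rowOffset_of_length_le le_rfl, ← hw.1])
  rowOffset_le m := by
    simpa only [hv.1] using hw.rowOffset_le_sum_count hy hv.2 m
  le_rowCap i := hv.1 i ▸ hw.count_le_rowCap hy h2 i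

end WordBounds

section Support

variable {a p nu : List ℕ}

lemma inSupportOv_iff_admissible {ov : ℕ → Bool} (hs : a.Pairwise (· ≥ ·)) (h2 : PartsGE a 2) :
    InSupportOv a ov nu ↔ Admissible a ov fun j => nu.getD j 0 := by
  constructor
  · rintro ⟨w, hw, hy, hcount⟩
    exact hw.admissible hy h2 hcount
  · intro hnu
    obtain ⟨w, hw, hy, hcount, -⟩ := hnu.exists_word hs h2 hnu.isAvoidable_length
    exact ⟨w, hw, hy, hcount⟩

lemma admissible_getD_iff {ov : ℕ → Bool} (hnu : nu.Pairwise (· ≥ ·)) :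
    Admissible a ov (fun j => nu.getD j 0) ↔
      DomLE a nu ∧ ∀ i, nu.getD i 0 ≤ rowCap a ov i := by
  have hanti := antitone_getD_of_pairwise hnu
  have hsum (h0 : nu.getD a.length 0 = 0) :
      nu.sum = ∑ j ∈ range a.length, nu.getD j 0 := by
    rw [sum_eq_sum_getD (le_max_right a.length nu.length),
      sum_range_eq_of_antitone hanti h0 (le_max_left _ _)]
  constructor
  · intro h
    refine ⟨⟨?_, fun m => ?_⟩, h.le_rowCap⟩
    · rw [hsum (h.eq_zero_of_length_le le_rfl), h.sum_eq]
    · rw [sum_take_eq_sum_getD nu]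
      exact h.rowOffset_le m
  · rintro ⟨⟨hsum_eq, hdom⟩, hcap⟩
    have h0 : nu.getD a.length 0 = 0 :=
      Nat.le_zero.1 ((hcap _).trans_eq (rowCap_of_length_le le_rfl))
    exact ⟨hanti, by rw [hsum_eq, hsum h0],
      fun m => (hdom m).trans_eq (sum_take_eq_sum_getD nu m), hcap⟩

lemma domLE_pair_iff {N q : ℕ} (hq : q ≤ N) (hnu : nu.sum = N) :
    DomLE nu [N - q, q] ↔ nu.getD 0 0 ≤ N - q := by
  constructor
  · intro h
    simpa [sum_take_eq_sum_getD] using h.2 1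
  · intro h
    refine ⟨by simp [hnu, hq], fun i => ?_⟩
    rcases i with _ | _ | i
    · simp
    · simpa [sum_take_eq_sum_getD] using h
    · have := rowOffset_le_sum nu (i + 2)
      simp only [rowOffset, hnu] at this
      simpa [hq] using this

lemma inInterval_iff (h2 : PartsGE a 2) (hp : IsOverlapSeq a p) :
    InInterval a p nu ↔ DomLE a nu ∧ nu.getD 0 0 ≤ rowCap a (ovOf p) 0 := by
  have hcap := rowCap_add (ov := ovOf p) h2 0
  rw [← hp.getD_eq_overlapsFrom] at hcap
  refine and_congr_right fun hdom => ?_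
  rw [domLE_pair_iff (by omega) hdom.1.symm, rowCap, hp.getD_eq_overlapsFrom, List.drop_zero]

lemma fullSupport_iff (hs : a.Pairwise (· ≥ ·)) (h2 : PartsGE a 2) (hp : IsOverlapSeq a p) :
    FullSupport a p ↔ ∀ nu, IsPartition nu → DomLE a nu → nu.getD 0 0 ≤ rowCap a (ovOf p) 0 →
      ∀ i, nu.getD i 0 ≤ rowCap a (ovOf p) i := by
  simp only [FullSupport, Set.ext_iff, SupportSet, IntervalSet, Set.mem_ofPred_eq, InSupport,
    inSupportOv_iff_admissible hs h2, inInterval_iff h2 hp]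
  refine forall_congr' fun nu => ⟨fun h hnu hdom h0 => ?_, fun h => and_congr_right fun hnu => ?_⟩
  · exact ((admissible_getD_iff hnu.1).1 (h.2 ⟨hnu, hdom, h0⟩).2).2
  · rw [admissible_getD_iff hnu.1]
    exact and_congr_right fun hdom => ⟨fun hcap => hcap 0, h hnu hdom⟩

end Support

section Witnesses

variable {a p : List ℕ}

lemma rho_eq (h2 : PartsGE a 2) (hp : IsOverlapSeq a p) (i : ℕ) :
    rho a p i = rowCap a (ovOf p) i + 1 := by
  have := rowCap_add (ov := ovOf p) h2 i
  have := rowOffset_add_sum_drop a i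
  rw [rho, hp.getD_eq_overlapsFrom]
  omega

lemma sum_max_rho (a p : List ℕ) (i : ℕ) :
    ∑ j ∈ range i, max (a.getD j 0) (rho a p i) = rowOffset a i + witSize a p i := by
  have hwit : witSize a p i = ∑ j ∈ range i, (rho a p i - a.getD j 0) := by
    rw [witSize, ← Ico_add_one_right_eq_Icc, sum_Ico_eq_sum_range]
    simp [wit]
  rw [hwit, rowOffset_eq_sum_getD, ← sum_add_distrib]
  exact sum_congr rfl fun j _ => by omega

lemma sum_max_le_of_antitone {u v : ℕ → ℕ} (hu : Antitone u)
    (huv : ∀ m, ∑ j ∈ range m, u j ≤ ∑ j ∈ range m, v j) {r m : ℕ} (hr : ∀ j < m, r ≤ v j) :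
    ∑ j ∈ range m, max (u j) r ≤ ∑ j ∈ range m, v j := by
  induction m with
  | zero => simp
  | succ m ih =>
    rcases le_total (u m) r with h | h
    · rw [sum_range_succ, sum_range_succ, max_eq_right h]
      exact add_le_add (ih fun j hj => hr j (by omega)) (hr m (by omega))
    · rw [sum_congr rfl fun j hj => max_eq_left (h.trans (hu (by simpa using mem_range.1 hj)))]
      exact huv (m + 1)

lemma witSize_lt_of_rowCap_lt (hs : a.Pairwise (· ≥ ·)) (h2 : PartsGE a 2)
    (hp : IsOverlapSeq a p) {nu : List ℕ} (hnu : nu.Pairwise (· ≥ ·)) (hdom : DomLE a nu)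
    {i : ℕ} (hi : rowCap a (ovOf p) i < nu.getD i 0) : witSize a p i < p.getD i 0 := by
  have hanti := antitone_getD_of_pairwise hnu
  have hmax : ∑ j ∈ range i, max (a.getD j 0) (rho a p i) ≤ ∑ j ∈ range i, nu.getD j 0 :=
    sum_max_le_of_antitone (antitone_getD_of_pairwise hs)
      (fun m => by simpa only [← sum_take_eq_sum_getD] using hdom.2 m)
      fun j hj => (rho_eq h2 hp i).trans_le (hi.trans_le (hanti hj.le))
  have htotal := rowOffset_le_sum nu (i + 1)
  have hcap := rowCap_add (ov := ovOf p) h2 i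
  rw [sum_max_rho] at hmax
  rw [rowOffset_eq_sum_getD, sum_range_succ, ← hdom.1] at htotal
  rw [hp.getD_eq_overlapsFrom]
  omega

/-- The least shape with `i + 1` parts that are at least `r` and at least the corresponding parts of
`a`, with `s` further boxes in its first part to bring it to the size of `a`.  For `r = ϱ_i` the
last part exceeds its `rowCap`. -/
def extremalShape (a : List ℕ) (r s i : ℕ) : List ℕ :=
  (List.range (i + 1)).map fun j => max (a.getD j 0) r + if j = 0 then s else 0

lemma getD_extremalShape (r s : ℕ) {i j : ℕ} (hj : j ≤ i) :
    (extremalShape a r s i).getD j 0 = max (a.getD j 0) r + if j = 0 then s else 0 := by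
  simp [extremalShape, List.getElem?_range (Nat.lt_succ_of_le hj)]

lemma isPartition_extremalShape (hs : a.Pairwise (· ≥ ·)) {r : ℕ} (hr : 0 < r) (s i : ℕ) :
    IsPartition (extremalShape a r s i) := by
  constructor
  · refine List.pairwise_map.2 (List.pairwise_lt_range.imp fun {j k} hjk => ?_)
    have := antitone_getD_of_pairwise hs hjk.le
    dsimp only at this
    split_ifs <;> omega
  · simp only [extremalShape, List.mem_map]
    rintro _ ⟨j, -, rfl⟩
    omega

lemma sum_extremalShape {r i : ℕ} (hi : a.getD i 0 ≤ r) (s : ℕ) :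
    (extremalShape a r s i).sum = ∑ j ∈ range i, max (a.getD j 0) r + r + s := by
  rw [sum_eq_sum_getD (m := i + 1) (by simp [extremalShape]),
    sum_congr rfl fun j hj => getD_extremalShape r s (by simpa [Nat.lt_succ_iff] using hj),
    sum_add_distrib, sum_range_succ, max_eq_right hi]
  simp

lemma domLE_extremalShape {r s i : ℕ} (hsum : (extremalShape a r s i).sum = a.sum) :
    DomLE a (extremalShape a r s i) := by
  refine ⟨hsum.symm, fun m => ?_⟩
  rcases le_or_gt m (i + 1) with hm | hm
  · rw [sum_take_eq_sum_getD, sum_take_eq_sum_getD]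
    refine sum_le_sum fun j hj => ?_
    rw [getD_extremalShape r s (by have := mem_range.1 hj; omega)]
    omega
  · have hlen : (extremalShape a r s i).length ≤ m := by
      rw [extremalShape, List.length_map, List.length_range]
      omega
    rw [List.take_of_length_le hlen, hsum]
    exact rowOffset_le_sum a m

lemma getD_extremalShape_zero_add_mul_le (r s i : ℕ) :
    (extremalShape a r s i).getD 0 0 + i * r ≤ (extremalShape a r s i).sum := by
  rw [sum_eq_sum_getD (m := i + 1) (by simp [extremalShape]), sum_range_succ', add_comm]
  gcongr
  calc i * r = ∑ _j ∈ range i, r := by simp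
    _ ≤ _ := sum_le_sum fun j hj => by
      rw [getD_extremalShape r s (by simpa using hj)]
      omega

lemma exists_rowCap_lt_of_witSize_lt (hs : a.Pairwise (· ≥ ·)) (h2 : PartsGE a 2)
    (hp : IsOverlapSeq a p) {i : ℕ} (hi : 1 ≤ i) (hlt : witSize a p i < p.getD i 0) :
    ∃ nu, IsPartition nu ∧ DomLE a nu ∧ nu.getD 0 0 ≤ rowCap a (ovOf p) 0 ∧
      rowCap a (ovOf p) i < nu.getD i 0 := by
  set r := rho a p i with hr_def
  have hr : r = rowCap a (ovOf p) i + 1 := rho_eq h2 hp i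
  have hcap := rowCap_add (ov := ovOf p) h2 i
  have hcap0 := rowCap_add (ov := ovOf p) h2 0
  have hP := overlapsFrom_le (ovOf p) a.length i
  have hP0 := overlapsFrom_le (ovOf p) a.length 0
  have hrest := rowOffset_add_two_mul_le h2 (i + 1)
  have hparts := rowOffset_add_two_mul_le h2 i
  rw [hp.getD_eq_overlapsFrom] at hlt
  rw [rowOffset_succ] at hrest
  have hai : a.getD i 0 ≤ r := by omega
  have hsum : (extremalShape a r (overlapsFrom (ovOf p) a.length i - 1 - witSize a p i) i).sum =
      a.sum := by
    rw [sum_extremalShape hai, sum_max_rho]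
    omega
  have hmul : i + r ≤ i * r + 1 := by
    obtain ⟨k, rfl⟩ := Nat.exists_eq_add_of_le' hi
    rw [hr, add_mul, one_mul]
    nlinarith
  have hfirst := getD_extremalShape_zero_add_mul_le (a := a) r
    (overlapsFrom (ovOf p) a.length i - 1 - witSize a p i) i
  refine ⟨_, isPartition_extremalShape hs (by omega) _ i, domLE_extremalShape hsum, ?_, ?_⟩
  · simp only [rowOffset, List.take_zero, List.sum_nil] at hcap0
    omega
  · rw [getD_extremalShape _ _ le_rfl]
    omega

lemma lt_lenp_of_pos {i : ℕ} (hp : Antitone fun i => p.getD i 0) (hi : 0 < p.getD i 0) :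
    i < lenp p := by
  have hlen : i < p.length := by
    by_contra! h
    rw [List.getD_eq_default _ _ h] at hi
    omega
  have hall : (p.take (i + 1)).countP (fun x => decide (x ≠ 0)) = (p.take (i + 1)).length := by
    refine List.countP_eq_length.2 fun y hy => ?_
    obtain ⟨s, hs, rfl⟩ := exists_getD_eq_of_mem_take hy
    exact decide_eq_true (hi.trans_le (hp (Nat.le_of_lt_succ hs))).ne'
  rw [List.length_take, min_eq_left hlen] at hall
  exact hall.ge.trans (List.take_sublist _ _).countP_le

lemma witnesses_oversized_iff (hp : IsOverlapSeq a p) :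
    (lenp p < 2 ∨ (2 ≤ lenp p ∧ ∀ i, 1 ≤ i → i + 1 ≤ lenp p → p.getD i 0 ≤ witSize a p i)) ↔
      ∀ i ≥ 1, p.getD i 0 ≤ witSize a p i := by
  constructor
  · intro h i hi
    rcases Nat.eq_zero_or_pos (p.getD i 0) with h0 | h0
    · omega
    · have := lt_lenp_of_pos hp.antitone h0
      rcases h with h | ⟨-, h⟩
      · omega
      · exact h i hi this
  · intro h
    exact (lt_or_ge (lenp p) 2).imp_right fun hlen => ⟨hlen, fun i hi _ => h i hi⟩

end Witnesses

/-- Theorem `corf`: `R_a^p` has full Schur support iff either `ℓ(p) < 2`,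
or `ℓ(p) ≥ 2` and for every `1 ≤ i ≤ ℓ(p)−1` the `i`-witness vector is oversized with respect
to its slack: `Σ_{j=1}^i [ϱ_i − a_j]₊ ≥ p_{i+1}`. -/
theorem full_support_iff_witnesses_oversized
    (a p : List ℕ) (ha : IsPartition a) (h2 : PartsGE a 2) (hp : IsOverlapSeq a p) :
    FullSupport a p ↔
      (lenp p < 2 ∨
        (2 ≤ lenp p ∧ ∀ i, 1 ≤ i → i + 1 ≤ lenp p → p.getD i 0 ≤ witSize a p i)) := by
  rw [witnesses_oversized_iff hp, fullSupport_iff ha.1 h2 hp]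
  constructor
  · intro hfull i hi
    by_contra! hlt
    obtain ⟨nu, hnu, hdom, h0, hcap⟩ := exists_rowCap_lt_of_witSize_lt ha.1 h2 hp hi hlt
    exact hcap.not_ge (hfull nu hnu hdom h0 i)
  · intro hwit nu hnu hdom h0 i
    rcases Nat.eq_zero_or_pos i with rfl | hi
    · exact h0
    · by_contra! hcap
      exact (hwit i hi).not_gt (witSize_lt_of_rowCap_lt ha.1 h2 hp hnu.1 hdom hcap)

end RibbonSupport
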